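/- Let δ, θ₁, θ₂ ∈ (0,1), a := (1-δ)/2, let w be a real number with a ≤ w ≤ 1-a, and let r ∈ ℝ. Let p̄₀ := (a/(1-w), 1 - a/(1-w), 0) and p̄₁ := (a/w, 0, 1 - a/w) be distributions on a three-element set, and write p̄_θ := (1-θ)p̄₀ + θ p̄₁. Then for every finite set Y and every pair of distributions p₀, p₁ on Y with ‖(1-w)p₀ - w p₁‖₁ ≤ δ, the Han–Kobayashi exponent satisfies sup_{s>0} (s/(1+s))·(r - D_{1+s}(p_{θ₂}‖p_{θ₁})) ≥ sup_{s>0} (s/(1+s))·(r - D_{1+s}(p̄_{θ₂}‖p̄_{θ₁})); that is, the pair (p̄₀, p̄₁) attains the minimum of this exponent under the constraint. -/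

import Mathlib

/-!
For each fixed `s > 0` the sum inside the logarithm of `renyi` is `∑ y, F (p₀ y) (p₁ y)`, where
`F u v = ((1-θ₂)u + θ₂v)^(1+s) * ((1-θ₁)u + θ₁v)^(-s)` is positively homogeneous and subadditive
on the quadrant (it is a perspective function; subadditivity follows from its tangent lines,
`tangent_le`). With `m = min ((1-w)u) (w v)`, the decomposition
`(u, v) = m (1/(1-w), 1/w) + (u - m/(1-w)) (1, 0) + (v - m/w) (0, 1)` and subadditivity bound the
sum by `M F(1/(1-w), 1/w) + (1 - M/(1-w)) F(1,0) + (1 - M/w) F(0,1)`, where `M = ∑ m`. By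
subadditivity again this is nonincreasing in `M`. The `ℓ¹` constraint says exactly `M ≥ a`, and
at `M = a` the bound is the sum belonging to `(p̄₀, p̄₁)`. So the Rényi entropy of every
admissible pair is at most that of `(p̄₀, p̄₁)`, for every `s`, and the suprema compare because
Rényi entropies are nonnegative, which keeps the exponent bounded above by `|r|`.
-/

open Finset Real

/-- A distribution on a finite set `Y`. -/
def IsDist {Y : Type*} [Fintype Y] (p : Y → ℝ) : Prop :=
  (∀ y, 0 ≤ p y) ∧ ∑ y, p y = 1

/-- `‖(1-w)p₀ - w p₁‖₁`. -/
noncomputable def l1W {Y : Type*} [Fintype Y] (w : ℝ) (p0 p1 : Y → ℝ) : ℝ :=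
  ∑ y, |(1 - w) * p0 y - w * p1 y|

/-- The mixture `p_θ := (1-θ)p₀ + θ p₁`. -/
noncomputable def mix {Y : Type*} (θ : ℝ) (p0 p1 : Y → ℝ) : Y → ℝ :=
  fun y => (1 - θ) * p0 y + θ * p1 y

/-- The relative Rényi entropy `D_{1+s}(q‖q')`, with a term of the sum taken to be `0`
whenever `q y = q' y = 0`. -/
noncomputable def renyi {Y : Type*} [Fintype Y] (s : ℝ) (q q' : Y → ℝ) : ℝ :=
  (1 / s) * Real.log (∑ y, if q y = 0 ∧ q' y = 0 then 0 else q y ^ (1 + s) * q' y ^ (-s))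

/-- The summand of the Rényi sum of `p_{θ₂}` relative to `p_{θ₁}` at a point where `p₀`, `p₁` take
the values `u`, `v`. At `u = v = 0` it is `0`, because `0 ^ (1 + s) = 0` for `s > 0`. -/
noncomputable def renyiTerm (s θ₁ θ₂ u v : ℝ) : ℝ :=
  ((1 - θ₂) * u + θ₂ * v) ^ (1 + s) * ((1 - θ₁) * u + θ₁ * v) ^ (-s)

/-- The tangent line, at the point where `x / y = t`, of the degree-one homogeneous convex
function `x ^ (1 + s) * y ^ (-s)` lies below it. -/
lemma tangent_le {s t x y : ℝ} (hs : 0 < s) (ht : 0 < t) (hx : 0 ≤ x) (hy : 0 < y) :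
    (1 + s) * t ^ s * x - s * t ^ (1 + s) * y ≤ x ^ (1 + s) * y ^ (-s) := by
  -- Bernoulli's inequality for `z = x / (y t)`, multiplied by `y t ^ (1 + s)`
  set z := x / (y * t) with hz
  have hz0 : 0 ≤ z := by positivity
  have hxz : x = z * (y * t) := by rw [hz]; field_simp
  have hb := one_add_mul_self_le_rpow_one_add (s := z - 1) (by linarith) (p := 1 + s) (by linarith)
  rw [add_sub_cancel] at hb
  have hmul := mul_le_mul_of_nonneg_left hb (by positivity : 0 ≤ y * t ^ (1 + s))
  have ht1 : t ^ (1 + s) = t * t ^ s := by rw [rpow_add ht, rpow_one]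
  have hy1 : y ^ (1 + s) * y ^ (-s) = y := by
    rw [← rpow_add hy]; simp
  have hR : x ^ (1 + s) * y ^ (-s) = y * t ^ (1 + s) * z ^ (1 + s) := by
    rw [hxz, mul_rpow hz0 (by positivity), mul_rpow hy.le ht.le]
    calc _ = (y ^ (1 + s) * y ^ (-s)) * t ^ (1 + s) * z ^ (1 + s) := by ring
      _ = _ := by rw [hy1]
  rw [hR]
  refine le_trans (le_of_eq ?_) hmul
  rw [hxz, ht1]; ring

lemma mix_pos {θ u v : ℝ} (hθ : θ ∈ Set.Ioo (0 : ℝ) 1) (hu : 0 ≤ u) (hv : 0 ≤ v)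
    (h : 0 < u + v) : 0 < (1 - θ) * u + θ * v := by
  have h0 := hθ.1
  have h1 : 0 < 1 - θ := sub_pos.2 hθ.2
  rcases hu.eq_or_lt with rfl | hu'
  · have : 0 < v := by linarith
    positivity
  · positivity

lemma renyiTerm_zero {s : ℝ} (hs : 0 < s) (θ₁ θ₂ : ℝ) : renyiTerm s θ₁ θ₂ 0 0 = 0 := by
  simp [renyiTerm, zero_rpow (by linarith : 1 + s ≠ 0)]

lemma tangent_le_renyiTerm {s t θ₁ θ₂ u v : ℝ} (hs : 0 < s) (ht : 0 < t)
    (hθ₁ : θ₁ ∈ Set.Ioo (0 : ℝ) 1) (hθ₂ : θ₂ ∈ Set.Ioo (0 : ℝ) 1) (hu : 0 ≤ u) (hv : 0 ≤ v) :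
    (1 + s) * t ^ s * ((1 - θ₂) * u + θ₂ * v) - s * t ^ (1 + s) * ((1 - θ₁) * u + θ₁ * v)
      ≤ renyiTerm s θ₁ θ₂ u v := by
  rcases (add_nonneg hu hv).eq_or_lt with h | h
  · obtain rfl : u = 0 := by linarith
    obtain rfl : v = 0 := by linarith
    rw [renyiTerm_zero hs]; simp
  · exact tangent_le hs ht (mix_pos hθ₂ hu hv h).le (mix_pos hθ₁ hu hv h)

lemma renyiTerm_add_le {s θ₁ θ₂ u v u' v' : ℝ} (hs : 0 < s)
    (hθ₁ : θ₁ ∈ Set.Ioo (0 : ℝ) 1) (hθ₂ : θ₂ ∈ Set.Ioo (0 : ℝ) 1)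
    (hu : 0 ≤ u) (hv : 0 ≤ v) (hu' : 0 ≤ u') (hv' : 0 ≤ v') :
    renyiTerm s θ₁ θ₂ (u + u') (v + v') ≤ renyiTerm s θ₁ θ₂ u v + renyiTerm s θ₁ θ₂ u' v' := by
  rcases (add_nonneg (add_nonneg hu hu') (add_nonneg hv hv')).eq_or_lt with h | h
  · obtain rfl : u = 0 := by linarith
    obtain rfl : v = 0 := by linarith
    obtain rfl : u' = 0 := by linarith
    obtain rfl : v' = 0 := by linarith
    simp [renyiTerm_zero hs]
  · have hX := mix_pos hθ₂ (add_nonneg hu hu') (add_nonneg hv hv') h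
    have hY := mix_pos hθ₁ (add_nonneg hu hu') (add_nonneg hv hv') h
    set X := (1 - θ₂) * (u + u') + θ₂ * (v + v') with hXd
    set Y := (1 - θ₁) * (u + u') + θ₁ * (v + v') with hYd
    have ht : 0 < X / Y := div_pos hX hY
    have h1 := tangent_le_renyiTerm hs ht hθ₁ hθ₂ hu hv
    have h2 := tangent_le_renyiTerm hs ht hθ₁ hθ₂ hu' hv'
    -- the tangent line of slope parameter `X / Y` touches the function at `(X, Y)`
    have h3 : renyiTerm s θ₁ θ₂ (u + u') (v + v')
        = (1 + s) * (X / Y) ^ s * X - s * (X / Y) ^ (1 + s) * Y := by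
      have e1 : renyiTerm s θ₁ θ₂ (u + u') (v + v') = X * (X / Y) ^ s := by
        rw [renyiTerm, ← hXd, ← hYd, rpow_add hX, rpow_one, rpow_neg hY.le,
          div_rpow hX.le hY.le, div_eq_mul_inv, mul_assoc]
      rw [e1, rpow_add ht, rpow_one]
      field_simp
      ring
    rw [h3, hXd, hYd]
    linarith

lemma renyiTerm_smul {s θ₁ θ₂ u v c : ℝ} (hs : 0 < s)
    (hθ₁ : θ₁ ∈ Set.Ioo (0 : ℝ) 1) (hθ₂ : θ₂ ∈ Set.Ioo (0 : ℝ) 1)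
    (hu : 0 ≤ u) (hv : 0 ≤ v) (hc : 0 ≤ c) :
    renyiTerm s θ₁ θ₂ (c * u) (c * v) = c * renyiTerm s θ₁ θ₂ u v := by
  rcases hc.eq_or_lt with rfl | hc'
  · simp [renyiTerm_zero hs]
  · have a1 : 0 ≤ 1 - θ₁ := (sub_pos.2 hθ₁.2).le
    have a2 : 0 ≤ 1 - θ₂ := (sub_pos.2 hθ₂.2).le
    have b1 := hθ₁.1.le
    have b2 := hθ₂.1.le
    have hcc : c ^ (1 + s) * c ^ (-s) = c := by rw [← rpow_add hc']; simp
    have e : ∀ θ : ℝ, (1 - θ) * (c * u) + θ * (c * v) = c * ((1 - θ) * u + θ * v) :=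
      fun θ => by ring
    rw [renyiTerm, renyiTerm, e, e, mul_rpow hc (by positivity), mul_rpow hc (by positivity)]
    calc _ = (c ^ (1 + s) * c ^ (-s)) * (((1 - θ₂) * u + θ₂ * v) ^ (1 + s)
          * ((1 - θ₁) * u + θ₁ * v) ^ (-s)) := by ring
      _ = _ := by rw [hcc]

/-- The bound coming from the decomposition of `(u, v)` along `(1/(1-w), 1/w)`, `(1, 0)` and
`(0, 1)`; any `m ≥ 0` with `m ≤ (1-w)u` and `m ≤ wv` may be split off. -/
lemma renyiTerm_le_split {s θ₁ θ₂ u v w m : ℝ} (hs : 0 < s)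
    (hθ₁ : θ₁ ∈ Set.Ioo (0 : ℝ) 1) (hθ₂ : θ₂ ∈ Set.Ioo (0 : ℝ) 1)
    (hw0 : 0 < w) (hw1 : 0 < 1 - w) (hm : 0 ≤ m) (hmu : m ≤ (1 - w) * u) (hmv : m ≤ w * v) :
    renyiTerm s θ₁ θ₂ u v ≤ m * renyiTerm s θ₁ θ₂ (1 / (1 - w)) (1 / w)
      + (u - m / (1 - w)) * renyiTerm s θ₁ θ₂ 1 0 + (v - m / w) * renyiTerm s θ₁ θ₂ 0 1 := by
  have hu : 0 ≤ u - m / (1 - w) := by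
    rw [sub_nonneg, div_le_iff₀ hw1]; linarith
  have hv : 0 ≤ v - m / w := by
    rw [sub_nonneg, div_le_iff₀ hw0]; linarith
  have i1 : 0 ≤ 1 / (1 - w) := by positivity
  have i2 : 0 ≤ 1 / w := by positivity
  rw [← renyiTerm_smul hs hθ₁ hθ₂ i1 i2 hm,
    ← renyiTerm_smul hs hθ₁ hθ₂ zero_le_one le_rfl hu,
    ← renyiTerm_smul hs hθ₁ hθ₂ le_rfl zero_le_one hv]
  have h1 := renyiTerm_add_le hs hθ₁ hθ₂ (mul_nonneg hm i1) (mul_nonneg hm i2)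
    (mul_nonneg hu zero_le_one) (mul_nonneg hu le_rfl)
  have h2 := renyiTerm_add_le hs hθ₁ hθ₂
    (add_nonneg (mul_nonneg hm i1) (mul_nonneg hu zero_le_one))
    (add_nonneg (mul_nonneg hm i2) (mul_nonneg hu le_rfl))
    (mul_nonneg hv le_rfl) (mul_nonneg hv zero_le_one)
  have eu : m * (1 / (1 - w)) + (u - m / (1 - w)) * 1 + (v - m / w) * 0 = u := by ring
  have ev : m * (1 / w) + (u - m / (1 - w)) * 0 + (v - m / w) * 1 = v := by ring
  rw [eu, ev] at h2
  linarith

lemma renyi_mix_eq {Y : Type*} [Fintype Y] {s θ₁ θ₂ : ℝ} (hs : 0 < s) (p0 p1 : Y → ℝ) :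
    renyi s (mix θ₂ p0 p1) (mix θ₁ p0 p1)
      = 1 / s * log (∑ y, renyiTerm s θ₁ θ₂ (p0 y) (p1 y)) := by
  unfold renyi
  congr 2
  refine Finset.sum_congr rfl fun y _ => ?_
  split_ifs with h
  · have h1 : (1 - θ₂) * p0 y + θ₂ * p1 y = 0 := h.1
    rw [renyiTerm, h1, zero_rpow (by linarith), zero_mul]
  · rfl

/-- The Rényi sum is at least `1`: sum the tangent lines of parameter `t = 1`. -/
lemma one_le_sum_renyiTerm {Y : Type*} [Fintype Y] {s θ₁ θ₂ : ℝ} (hs : 0 < s)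
    (hθ₁ : θ₁ ∈ Set.Ioo (0 : ℝ) 1) (hθ₂ : θ₂ ∈ Set.Ioo (0 : ℝ) 1) {p0 p1 : Y → ℝ}
    (h0 : IsDist p0) (h1 : IsDist p1) : 1 ≤ ∑ y, renyiTerm s θ₁ θ₂ (p0 y) (p1 y) := by
  have h := Finset.sum_le_sum fun y (_ : y ∈ Finset.univ) =>
    tangent_le_renyiTerm hs one_pos hθ₁ hθ₂ (h0.1 y) (h1.1 y)
  simp only [one_rpow, mul_one, Finset.sum_sub_distrib, ← Finset.mul_sum,
    Finset.sum_add_distrib, h0.2, h1.2] at h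
  linarith

lemma sum_renyiTerm_le {Y : Type*} [Fintype Y] {s θ₁ θ₂ w δ a : ℝ} (hs : 0 < s)
    (hθ₁ : θ₁ ∈ Set.Ioo (0 : ℝ) 1) (hθ₂ : θ₂ ∈ Set.Ioo (0 : ℝ) 1)
    (hw0 : 0 < w) (hw1 : 0 < 1 - w) (ha : a = (1 - δ) / 2) {p0 p1 : Y → ℝ}
    (h0 : IsDist p0) (h1 : IsDist p1) (hl : l1W w p0 p1 ≤ δ) :
    ∑ y, renyiTerm s θ₁ θ₂ (p0 y) (p1 y) ≤ a * renyiTerm s θ₁ θ₂ (1 / (1 - w)) (1 / w)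
      + (1 - a / (1 - w)) * renyiTerm s θ₁ θ₂ 1 0 + (1 - a / w) * renyiTerm s θ₁ θ₂ 0 1 := by
  set A := renyiTerm s θ₁ θ₂ (1 / (1 - w)) (1 / w)
  set B := renyiTerm s θ₁ θ₂ 1 0
  set C := renyiTerm s θ₁ θ₂ 0 1
  set M := ∑ y, min ((1 - w) * p0 y) (w * p1 y) with hM
  have hsum : ∑ y, renyiTerm s θ₁ θ₂ (p0 y) (p1 y)
      ≤ M * A + (1 - M / (1 - w)) * B + (1 - M / w) * C := by
    have h := Finset.sum_le_sum fun y (_ : y ∈ Finset.univ) =>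
      renyiTerm_le_split hs hθ₁ hθ₂ hw0 hw1
        (le_min (mul_nonneg hw1.le (h0.1 y)) (mul_nonneg hw0.le (h1.1 y)))
        (min_le_left _ _) (min_le_right ((1 - w) * p0 y) (w * p1 y))
    simp only [Finset.sum_add_distrib, ← Finset.sum_mul, Finset.sum_sub_distrib,
      ← Finset.sum_div, h0.2, h1.2] at h
    exact h
  have haM : a ≤ M := by
    have e : l1W w p0 p1 = 1 - 2 * M := by
      have e1 : ∀ y, |(1 - w) * p0 y - w * p1 y|
          = (1 - w) * p0 y + w * p1 y - 2 * min ((1 - w) * p0 y) (w * p1 y) := fun y => by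
        rw [← max_sub_min_eq_abs', ← min_add_max ((1 - w) * p0 y) (w * p1 y)]; ring
      simp only [l1W, e1, Finset.sum_sub_distrib, Finset.sum_add_distrib, ← Finset.mul_sum,
        h0.2, h1.2, ← hM]
      ring
    rw [e] at hl; linarith
  have hABC : A ≤ 1 / (1 - w) * B + 1 / w * C := by
    have h := renyiTerm_le_split (m := 0) (u := 1 / (1 - w)) (v := 1 / w) hs hθ₁ hθ₂ hw0 hw1 le_rfl
      (by positivity) (by positivity)
    simp only [zero_mul, zero_div, sub_zero, zero_add] at h
    exact h
  have hmono := mul_le_mul_of_nonneg_left hABC (sub_nonneg.2 haM)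
  have e : M * A + (1 - M / (1 - w)) * B + (1 - M / w) * C
      = a * A + (1 - a / (1 - w)) * B + (1 - a / w) * C
        + ((M - a) * A - (M - a) * (1 / (1 - w) * B + 1 / w * C)) := by ring
  linarith

theorem stmt19 (δ θ₁ θ₂ a w r : ℝ) (hδ : δ ∈ Set.Ioo (0 : ℝ) 1)
    (hθ₁ : θ₁ ∈ Set.Ioo (0 : ℝ) 1) (hθ₂ : θ₂ ∈ Set.Ioo (0 : ℝ) 1)
    (ha : a = (1 - δ) / 2) (hw : a ≤ w) (hw' : w ≤ 1 - a)
    (pb0 pb1 : Fin 3 → ℝ)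
    (hpb0 : pb0 = ![a / (1 - w), 1 - a / (1 - w), 0])
    (hpb1 : pb1 = ![a / w, 0, 1 - a / w]) :
    ∀ (Y : Type) [Fintype Y], ∀ p0 p1 : Y → ℝ, IsDist p0 → IsDist p1 →
      l1W w p0 p1 ≤ δ →
      sSup ((fun s => s / (1 + s) * (r - renyi s (mix θ₂ pb0 pb1) (mix θ₁ pb0 pb1))) ''
          Set.Ioi (0 : ℝ))
        ≤ sSup ((fun s => s / (1 + s) * (r - renyi s (mix θ₂ p0 p1) (mix θ₁ p0 p1))) ''
            Set.Ioi (0 : ℝ)) := by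
  intro Y _ p0 p1 h0 h1 hl
  have ha0 : 0 < a := by rw [ha]; linarith [hδ.2]
  have hw0 : 0 < w := by linarith
  have hw1 : 0 < 1 - w := by linarith
  have hle0 : a / (1 - w) ≤ 1 := by rw [div_le_one hw1]; linarith
  have hle1 : a / w ≤ 1 := by rw [div_le_one hw0]; linarith
  have key : ∀ s : ℝ, 0 < s → renyi s (mix θ₂ p0 p1) (mix θ₁ p0 p1)
      ≤ renyi s (mix θ₂ pb0 pb1) (mix θ₁ pb0 pb1) := by
    intro s hs
    rw [renyi_mix_eq hs, renyi_mix_eq hs]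
    refine mul_le_mul_of_nonneg_left ?_ (by positivity)
    refine log_le_log (lt_of_lt_of_le one_pos (one_le_sum_renyiTerm hs hθ₁ hθ₂ h0 h1)) ?_
    refine (sum_renyiTerm_le hs hθ₁ hθ₂ hw0 hw1 ha h0 h1 hl).trans (le_of_eq ?_)
    rw [← renyiTerm_smul hs hθ₁ hθ₂ (by positivity) (by positivity) ha0.le,
      ← renyiTerm_smul hs hθ₁ hθ₂ zero_le_one le_rfl (sub_nonneg.2 hle0),
      ← renyiTerm_smul hs hθ₁ hθ₂ le_rfl zero_le_one (sub_nonneg.2 hle1), hpb0, hpb1]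
    simp [Fin.sum_univ_three, div_eq_mul_inv]
  -- nonnegativity of the Rényi entropies makes the larger family bounded above, so its `sSup`
  -- is a genuine supremum
  have hbdd : BddAbove ((fun s => s / (1 + s) * (r - renyi s (mix θ₂ p0 p1) (mix θ₁ p0 p1))) ''
      Set.Ioi (0 : ℝ)) := by
    refine ⟨|r|, ?_⟩
    rintro _ ⟨s, hs, rfl⟩
    have hs : 0 < s := hs
    have hD : 0 ≤ renyi s (mix θ₂ p0 p1) (mix θ₁ p0 p1) := by
      rw [renyi_mix_eq hs]
      exact mul_nonneg (by positivity) (log_nonneg (one_le_sum_renyiTerm hs hθ₁ hθ₂ h0 h1))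
    have hc : s / (1 + s) ≤ 1 := by rw [div_le_one (by positivity)]; linarith
    calc s / (1 + s) * (r - renyi s (mix θ₂ p0 p1) (mix θ₁ p0 p1))
        ≤ s / (1 + s) * |r| :=
          mul_le_mul_of_nonneg_left (by linarith [le_abs_self r]) (by positivity)
      _ ≤ |r| := mul_le_of_le_one_left (abs_nonneg r) hc
  refine csSup_le (Set.Nonempty.image _ ⟨1, Set.mem_Ioi.2 one_pos⟩) ?_
  rintro _ ⟨s, hs, rfl⟩
  have hs' : 0 < s := hs
  refine le_csSup_of_le hbdd ⟨s, hs, rfl⟩ ?_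
  exact mul_le_mul_of_nonneg_left (by linarith [key s hs']) (by positivity)
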